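/- arXiv:0804.2146 — 4 statements merged into one kernel-verified Lean document; each statement's English description precedes it below -/
import Mathlib

section
/- Let h₀ and h₁ be complex Hilbert spaces, let E₁₁ be a bounded self-adjoint operator on h₁, and let E₁₀ : h₀ → h₁ be a bounded operator. Then 1 + (i/2)E₁₁ is invertible in the bounded operators on h₁, and defining S = (1 − (i/2)E₁₁)·(1 + (i/2)E₁₁)^{-1} and L = −i·(1 + (i/2)E₁₁)^{-1}·E₁₀, for all u, v ∈ h₁ and Φ ∈ h₀ the following are equivalent: (a) i·u − i·v + E₁₁·((u + v)/2) + E₁₀·Φ = 0; (b) v = S·u + L·Φ. (This is the boundary condition a₋Φ = S a₊Φ + LΦ defining the domain of the self-adjoint extension K = K₀ + Υ in the Chebotarev–Gregoratti Hamiltonian, with u, v playing the roles of a₊Φ and a₋Φ.) -/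
open ContinuousLinearMap

/-- The boundary condition `a₋Φ = S a₊Φ + LΦ` defining the domain of the self-adjoint
extension `K = K₀ + Υ`: vanishing of the coefficient of `a⋆†`, namely
`(i a₊ − i a₋ + E₁₁ a⋆ + E₁₀)Φ = 0` with `a⋆ = (a₊ + a₋)/2`, is equivalent to
`a₋Φ = S a₊Φ + LΦ` with the Hudson–Parthasarathy parameters
`S = (1 − (i/2)E₁₁)(1 + (i/2)E₁₁)⁻¹` and `L = −i(1 + (i/2)E₁₁)⁻¹E₁₀`. -/
theorem boundary_condition_second_quantized {h₀ h₁ : Type*}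
    [NormedAddCommGroup h₀] [InnerProductSpace ℂ h₀] [CompleteSpace h₀]
    [NormedAddCommGroup h₁] [InnerProductSpace ℂ h₁] [CompleteSpace h₁]
    (E₁₁ : h₁ →L[ℂ] h₁) (hE₁₁ : IsSelfAdjoint E₁₁) (E₁₀ : h₀ →L[ℂ] h₁) :
    IsUnit (1 + (Complex.I / 2) • E₁₁) ∧
    ∀ (u v : h₁) (Φ : h₀),
      (Complex.I • u - Complex.I • v + E₁₁ (((1:ℂ)/2) • (u + v)) + E₁₀ Φ = 0 ↔
        v = ((1 - (Complex.I / 2) • E₁₁) * Ring.inverse (1 + (Complex.I / 2) • E₁₁)) u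
          + ((-Complex.I) • (Ring.inverse (1 + (Complex.I / 2) • E₁₁) ∘L E₁₀)) Φ) := by
  have hU : IsUnit (1 + (Complex.I / 2) • E₁₁) := by
    have h2 : (2 * Complex.I) ∉ spectrum ℂ E₁₁ := by
      intro h
      have := hE₁₁.im_eq_zero_of_mem_spectrum h
      simp at this
    have h3 := spectrum.notMem_iff.mp h2
    have hne : -(Complex.I / 2) ≠ 0 := by simp
    have h4 : (1 + (Complex.I / 2) • E₁₁)
        = (Units.mk0 _ hne) • (algebraMap ℂ (h₁ →L[ℂ] h₁) (2 * Complex.I) - E₁₁) := by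
      rw [Units.smul_def, Units.val_mk0, Algebra.algebraMap_eq_smul_one, smul_sub, smul_smul]
      have : -(Complex.I / 2) * (2 * Complex.I) = 1 := by
        linear_combination -Complex.I_mul_I
      rw [this, one_smul, neg_smul, sub_neg_eq_add]
    rw [h4]
    exact h3.smul _
  refine ⟨hU, fun u v Φ => ?_⟩
  have hl := Ring.inverse_mul_cancel _ hU
  have hr := Ring.mul_inverse_cancel _ hU
  set A := 1 + (Complex.I / 2) • E₁₁ with hA
  set R := Ring.inverse A with hR
  have hB : (1 - (Complex.I / 2) • E₁₁) = (1 + 1) - A := by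
    rw [hA]; abel
  have hcomm : (1 - (Complex.I / 2) • E₁₁) * R = R * (1 - (Complex.I / 2) • E₁₁) := by
    rw [hB, sub_mul, mul_sub, hl, hr, add_mul, mul_add, one_mul, mul_one]
  have hrhs : ((1 - (Complex.I / 2) • E₁₁) * R) u + ((-Complex.I) • (R ∘L E₁₀)) Φ
      = R ((1 - (Complex.I / 2) • E₁₁) u + (-Complex.I) • E₁₀ Φ) := by
    rw [hcomm, map_add, map_smul]; rfl
  rw [hrhs]
  have hlx : ∀ x, R (A x) = x := fun x => by
    simpa using congrArg (fun T : h₁ →L[ℂ] h₁ => T x) hl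
  have hrx : ∀ x, A (R x) = x := fun x => by
    simpa using congrArg (fun T : h₁ →L[ℂ] h₁ => T x) hr
  have key : (1 - (Complex.I / 2) • E₁₁) u + (-Complex.I) • E₁₀ Φ - A v
      = (-Complex.I) • (Complex.I • u - Complex.I • v + E₁₁ (((1:ℂ)/2) • (u + v)) + E₁₀ Φ) := by
    have e1 : (1 - (Complex.I / 2) • E₁₁) u = u - (Complex.I / 2) • E₁₁ u := rfl
    have e2 : A v = v + (Complex.I / 2) • E₁₁ v := rfl
    rw [e1, e2, map_smul, map_add]
    match_scalars <;> first
      | ring1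
      | linear_combination Complex.I_mul_I
      | linear_combination -Complex.I_mul_I
  constructor
  · intro h
    rw [h, smul_zero, sub_eq_zero] at key
    rw [key, hlx]
  · intro h
    have h5 : A v = _ := (congrArg A h).trans (hrx _)
    rw [h5, sub_self] at key
    exact (smul_eq_zero.mp key.symm).resolve_left (by simp)
end

section
/- Let h₀ and h₁ be complex Hilbert spaces, E₁₁ a bounded self-adjoint operator on h₁, E₁₀ : h₀ → h₁ bounded, E₀₁ = E₁₀† : h₁ → h₀, and E₀₀ a bounded self-adjoint operator on h₀. Set R = (1 + (i/2)E₁₁)^{-1}, S = (1 − (i/2)E₁₁)·R, L = −i·R·E₁₀, and H = E₀₀ + (1/2)·E₀₁·((R − R†)/(2i))·E₁₀. Then for all u ∈ h₁ and Φ ∈ h₀, setting v = S·u + L·Φ, one has −i·(E₀₀·Φ + E₀₁·((u + v)/2)) = (−(1/2)·L†L − i·H)·Φ − L†·S·u. (This is the action −iK Φ = (−iK_ac − ½L†L − iH)Φ − L†S a₊Φ of the Chebotarev–Gregoratti Hamiltonian on its domain, with the absolutely continuous part K_ac subtracted; u and v play the roles of a₊Φ and a₋Φ.) -/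
open ContinuousLinearMap

theorem isUnit_aux {h₁ : Type*}
    [NormedAddCommGroup h₁] [InnerProductSpace ℂ h₁] [CompleteSpace h₁]
    (E : h₁ →L[ℂ] h₁) (hE : IsSelfAdjoint E) : IsUnit (1 + (Complex.I / 2) • E) := by
  have h : (2 * Complex.I) ∉ spectrum ℂ E := by
    intro hm
    have := congrArg Complex.im (hE.mem_spectrum_eq_re hm)
    simp at this
  rw [spectrum.notMem_iff] at h
  have hne : (-(Complex.I / 2)) ≠ 0 := by simp
  have h2 := (Units.mk0 _ hne).isUnit.map (algebraMap ℂ (h₁ →L[ℂ] h₁))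
  have h3 := h2.mul h
  convert h3 using 1
  rw [Units.val_mk0, ← Algebra.smul_def, smul_sub, Algebra.algebraMap_eq_smul_one, smul_smul]
  have : -(Complex.I / 2) * (2 * Complex.I) = 1 := by
    linear_combination -Complex.I_mul_I
  rw [this, one_smul, neg_smul, sub_neg_eq_add]

/-- The action of the Chebotarev–Gregoratti Hamiltonian on its domain (with the
absolutely continuous part subtracted): on vectors satisfying the boundary condition
`v = S u + L Φ` (where `u, v` play the roles of `a₊Φ, a₋Φ`), the remaining action
`−i(E₀₀Φ + E₀₁ a⋆Φ)` of the singular perturbation equals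
`(−½L†L − iH)Φ − L†S a₊Φ`. -/
theorem hamiltonian_action_on_domain {h₀ h₁ : Type*}
    [NormedAddCommGroup h₀] [InnerProductSpace ℂ h₀] [CompleteSpace h₀]
    [NormedAddCommGroup h₁] [InnerProductSpace ℂ h₁] [CompleteSpace h₁]
    (E₁₁ : h₁ →L[ℂ] h₁) (hE₁₁ : IsSelfAdjoint E₁₁)
    (E₁₀ : h₀ →L[ℂ] h₁) (E₀₁ : h₁ →L[ℂ] h₀) (hE₀₁ : E₀₁ = adjoint E₁₀)
    (E₀₀ : h₀ →L[ℂ] h₀) (hE₀₀ : IsSelfAdjoint E₀₀)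
    (R : h₁ →L[ℂ] h₁) (hR : R = Ring.inverse (1 + (Complex.I / 2) • E₁₁))
    (S : h₁ →L[ℂ] h₁) (hS : S = (1 - (Complex.I / 2) • E₁₁) * R)
    (L : h₀ →L[ℂ] h₁) (hL : L = (-Complex.I) • (R ∘L E₁₀))
    (H : h₀ →L[ℂ] h₀)
    (hH : H = E₀₀ + ((1:ℂ)/2) • (E₀₁ ∘L (((2 * Complex.I)⁻¹ • (R - adjoint R)) ∘L E₁₀))) :
    ∀ (u : h₁) (Φ : h₀) (v : h₁), v = S u + L Φ →
      (-Complex.I) • (E₀₀ Φ + E₀₁ (((1:ℂ)/2) • (u + v)))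
        = (-(1:ℂ)/2) • (adjoint L) (L Φ) - Complex.I • H Φ - (adjoint L) (S u) := by
  intro u Φ v hv
  have hA := isUnit_aux E₁₁ hE₁₁
  have hAR : (1 + (Complex.I / 2) • E₁₁) * R = 1 := by
    rw [hR]; exact Ring.mul_inverse_cancel _ hA
  have hRA : R * (1 + (Complex.I / 2) • E₁₁) = 1 := by
    rw [hR]; exact Ring.inverse_mul_cancel _ hA
  have hstar : star (1 + (Complex.I / 2) • E₁₁) = 1 - (Complex.I / 2) • E₁₁ := by
    rw [star_add, star_one, star_smul, hE₁₁.star_eq]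
    have : star (Complex.I / 2) = -(Complex.I / 2) := by simp [neg_div]
    rw [this, neg_smul, sub_eq_add_neg]
  have hRB : star R * (1 - (Complex.I / 2) • E₁₁) = 1 := by
    rw [← hstar, ← star_mul, hAR, star_one]
  have hS2 : S = (2 : ℂ) • R - 1 := by
    have : (1 - (Complex.I / 2) • E₁₁) = (2 : ℂ) • 1 - (1 + (Complex.I / 2) • E₁₁) := by
      module
    rw [hS, this, sub_mul, hAR, smul_mul_assoc, one_mul]
  have hRS : star R * S = R := by
    rw [hS, ← mul_assoc, hRB, one_mul]
  have e1 : ∀ x, S x = (2 : ℂ) • R x - x := fun x => by rw [hS2]; simp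
  have e2 : ∀ x, adjoint R (S x) = R x := fun x => by
    have := congrArg (fun T : h₁ →L[ℂ] h₁ => T x) hRS
    simpa [star_eq_adjoint] using this
  have e3 : ∀ x, adjoint R (R x) = ((1:ℂ)/2) • (R x + adjoint R x) := fun x => by
    have := e2 x
    rw [e1, map_sub, map_smul] at this
    linear_combination (norm := module) ((1:ℂ)/2) • this
  have hLad : ∀ x, adjoint L x = Complex.I • E₀₁ (adjoint R x) := fun x => by
    rw [hL, hE₀₁, map_smulₛₗ, adjoint_comp]; simp
  have hLx : L Φ = (-Complex.I) • R (E₁₀ Φ) := by rw [hL]; simp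
  have hHx : H Φ = E₀₀ Φ + ((1:ℂ)/2) • (2 * Complex.I)⁻¹ •
      (E₀₁ (R (E₁₀ Φ)) - E₀₁ (adjoint R (E₁₀ Φ))) := by rw [hH]; simp
  have hinv : (2 * Complex.I)⁻¹ = -(Complex.I / 2) := by
    rw [mul_inv, Complex.inv_I]; ring
  rw [hv, hLad, hLad, e2, hHx, hLx, e1, hinv]
  simp only [map_smul, map_add, map_sub, e3]
  match_scalars <;> ring_nf <;> simp only [Complex.I_sq] <;> ring_nf
end

section
/- Let h₀ and h₁ be complex Hilbert spaces, E₁₁ a bounded self-adjoint operator on h₁, E₁₀ : h₀ → h₁ bounded, E₀₁ = E₁₀†, and E₀₀ a bounded operator on h₀. Set R = (1 + (i/2)E₁₁)^{-1}, L = −i·R·E₁₀, and H = E₀₀ + (1/2)·E₀₁·((R − R†)/(2i))·E₁₀. Then −i·E₀₀ − (1/2)·E₀₁·R·E₁₀ = −(1/2)·L†L − i·H. (This is the (0,0)-block of the Itô matrix identity G = −i(1 + (i/2)EΠ)^{-1}E = (−½L†L − iH, −L†S; L, S − 1): the upper-left entry −iE₀₀ − ½E₀ℓ(1 + (i/2)Eℓℓ)^{-1}Eℓ0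 equals −½L†L − iH.) -/
open ContinuousLinearMap

/-- Key identity `R†R = (R + R†)/2` for the resolvent `R`. -/
theorem resolvent_aux {h : Type*}
    [NormedAddCommGroup h] [InnerProductSpace ℂ h] [CompleteSpace h]
    (E R : h →L[ℂ] h) (hE : IsSelfAdjoint E)
    (hR : R = Ring.inverse (1 + (Complex.I / 2) • E)) :
    star R * R = ((1:ℂ)/2) • (R + star R) := by
  by_cases hu : IsUnit (1 + (Complex.I / 2) • E)
  · have h1 : (1 + (Complex.I / 2) • E) * R = 1 := by
      rw [hR]; exact Ring.mul_inverse_cancel _ hu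
    have h2 : star R * star (1 + (Complex.I / 2) • E) = 1 := by
      rw [← star_mul, h1, star_one]
    have h3 : (1 + (Complex.I / 2) • E) + star (1 + (Complex.I / 2) • E) = (2:ℂ) • 1 := by
      rw [star_add, star_one, star_smul, hE.star_eq]
      have : star (Complex.I / 2) = -(Complex.I / 2) := by simp [neg_div]
      rw [this]
      module
    have h4 : R + star R = (2:ℂ) • (star R * R) := by
      calc R + star R
          = (star R * star (1 + (Complex.I / 2) • E)) * R
            + star R * ((1 + (Complex.I / 2) • E) * R) := by
              rw [h1, h2, one_mul, mul_one]
        _ = star R * ((1 + (Complex.I / 2) • E) + star (1 + (Complex.I / 2) • E)) * R := by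
              noncomm_ring
        _ = (2:ℂ) • (star R * R) := by
              rw [h3, mul_smul_comm, mul_one, smul_mul_assoc]
    rw [h4, smul_smul]; norm_num
  · rw [hR, Ring.inverse_non_unit _ hu]; simp

/-- The `(0,0)`-block of the Itô matrix identity
`G = −i(1 + (i/2)EΠ)⁻¹E = (−½L†L − iH, −L†S; L, S − 1)`: the upper-left entry
`−iE₀₀ − ½E₀ℓ(1 + (i/2)Eℓℓ)⁻¹Eℓ0` equals `−½L†L − iH`. -/
theorem ito_matrix_block_00 {h₀ h₁ : Type*}
    [NormedAddCommGroup h₀] [InnerProductSpace ℂ h₀] [CompleteSpace h₀]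
    [NormedAddCommGroup h₁] [InnerProductSpace ℂ h₁] [CompleteSpace h₁]
    (E₁₁ : h₁ →L[ℂ] h₁) (hE₁₁ : IsSelfAdjoint E₁₁)
    (E₁₀ : h₀ →L[ℂ] h₁) (E₀₁ : h₁ →L[ℂ] h₀) (hE₀₁ : E₀₁ = adjoint E₁₀)
    (E₀₀ : h₀ →L[ℂ] h₀)
    (R : h₁ →L[ℂ] h₁) (hR : R = Ring.inverse (1 + (Complex.I / 2) • E₁₁))
    (L : h₀ →L[ℂ] h₁) (hL : L = (-Complex.I) • (R ∘L E₁₀))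
    (H : h₀ →L[ℂ] h₀)
    (hH : H = E₀₀ + ((1:ℂ)/2) • (E₀₁ ∘L (((2 * Complex.I)⁻¹ • (R - adjoint R)) ∘L E₁₀))) :
    (-Complex.I) • E₀₀ - ((1:ℂ)/2) • (E₀₁ ∘L (R ∘L E₁₀))
      = (-(1:ℂ)/2) • ((adjoint L) ∘L L) - Complex.I • H := by
  have key := resolvent_aux E₁₁ R hE₁₁ hR
  rw [star_eq_adjoint] at key
  have hI : Complex.I * ((1:ℂ)/2) * (2 * Complex.I)⁻¹ = 1/4 := by
    field_simp
    norm_num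
  have hLL : (adjoint L) ∘L L
      = ((1:ℂ)/2) • (adjoint E₁₀ ∘L (R ∘L E₁₀))
        + ((1:ℂ)/2) • (adjoint E₁₀ ∘L (adjoint R ∘L E₁₀)) := by
    ext x
    have kx := congrArg (fun T : h₁ →L[ℂ] h₁ => adjoint E₁₀ (T (E₁₀ x))) key
    simp at kx
    have hadj : adjoint L = Complex.I • (adjoint E₁₀ ∘L adjoint R) := by
      rw [hL, map_smulₛₗ, adjoint_comp]
      simp
    rw [hadj, hL]
    simp [smul_smul, kx]
  have hHH : Complex.I • H = Complex.I • E₀₀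
      + ((1:ℂ)/4) • (adjoint E₁₀ ∘L (R ∘L E₁₀) - adjoint E₁₀ ∘L (adjoint R ∘L E₁₀)) := by
    rw [hH, hE₀₁, smul_add, smul_comp, comp_smul, smul_smul, smul_smul, hI, sub_comp, comp_sub]
  rw [hLL, hHH, hE₀₁]
  module
end

section
/- Let h₀ and h₁ be complex Hilbert spaces, E₁₁ a bounded self-adjoint operator on h₁, E₁₀ : h₀ → h₁ bounded, E₀₁ = E₁₀†, E₀₀ a bounded self-adjoint operator on h₀, σ a real number, and κ₊ = 1/2 + iσ, κ₋ = 1/2 − iσ. Set R = (1 + iκ₊E₁₁)^{-1}, S(σ) = (1 − iκ₋E₁₁)·R, L(σ) = −i·R·E₁₀, and H(σ) = E₀₀ + (X − X†)/(2i) where X = κ₊·E₀₁·R·E₁₀. Then: (i) for all u, v ∈ h₁ and Φ ∈ h₀, the equation i·(u − v) + E₁₁·(κ₋·u + κ₊·v) + E₁₀·Φ = 0 holds if and only if v = S(σ)·u + L(σ)·Φ; and (ii) whenever v = S(σ)·u + L(σ)·Φ, one has −i·(E₀₀·Φ + E₀₁·(κ₋·u + κ₊·v)) = (−(1/2)·L(σ)†L(σ)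 − i·H(σ))·Φ − L(σ)†·S(σ)·u. (This is the gauge-modified form of the Chebotarev–Gregoratti Hamiltonian theorem, with u, v playing the roles of a₊Φ, a₋Φ and 𝔞 = κ₋a₊ + κ₊a₋.) -/
open ContinuousLinearMap

/-- The gauge-modified form of the Chebotarev–Gregoratti Hamiltonian theorem, with
`κ± = 1/2 ± iσ` and `𝔞 = κ₋a₊ + κ₊a₋` (here `u, v` play the roles of `a₊Φ, a₋Φ`):
(i) the vanishing of the `𝔞†` coefficient, `i(u − v) + E₁₁(κ₋u + κ₊v) + E₁₀Φ = 0`,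
is equivalent to the boundary condition `v = S(σ)u + L(σ)Φ`; and
(ii) on that boundary condition the remaining action satisfies
`−i(E₀₀Φ + E₀₁(κ₋u + κ₊v)) = (−½L(σ)†L(σ) − iH(σ))Φ − L(σ)†S(σ)u`. -/
theorem gauge_modified_hamiltonian {h₀ h₁ : Type*}
    [NormedAddCommGroup h₀] [InnerProductSpace ℂ h₀] [CompleteSpace h₀]
    [NormedAddCommGroup h₁] [InnerProductSpace ℂ h₁] [CompleteSpace h₁]
    (E₁₁ : h₁ →L[ℂ] h₁) (hE₁₁ : IsSelfAdjoint E₁₁)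
    (E₁₀ : h₀ →L[ℂ] h₁) (E₀₁ : h₁ →L[ℂ] h₀) (hE₀₁ : E₀₁ = adjoint E₁₀)
    (E₀₀ : h₀ →L[ℂ] h₀) (hE₀₀ : IsSelfAdjoint E₀₀)
    (σ : ℝ) (κp κm : ℂ) (hκp : κp = 1/2 + Complex.I * σ) (hκm : κm = 1/2 - Complex.I * σ)
    (R : h₁ →L[ℂ] h₁) (hR : R = Ring.inverse (1 + (Complex.I * κp) • E₁₁))
    (S : h₁ →L[ℂ] h₁) (hS : S = (1 - (Complex.I * κm) • E₁₁) * R)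
    (L : h₀ →L[ℂ] h₁) (hL : L = (-Complex.I) • (R ∘L E₁₀))
    (X : h₀ →L[ℂ] h₀) (hX : X = κp • (E₀₁ ∘L (R ∘L E₁₀)))
    (H : h₀ →L[ℂ] h₀) (hH : H = E₀₀ + (2 * Complex.I)⁻¹ • (X - adjoint X)) :
    (∀ (u v : h₁) (Φ : h₀),
      Complex.I • (u - v) + E₁₁ (κm • u + κp • v) + E₁₀ Φ = 0 ↔
        v = S u + L Φ) ∧
    (∀ (u : h₁) (Φ : h₀) (v : h₁), v = S u + L Φ →
      (-Complex.I) • (E₀₀ Φ + E₀₁ (κm • u + κp • v))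
        = (-(1:ℂ)/2) • (adjoint L) (L Φ) - Complex.I • H Φ - (adjoint L) (S u)) := by
  have hmul : ∀ (T U : h₁ →L[ℂ] h₁) (x : h₁), (T * U) x = T (U x) := fun _ _ _ => rfl
  have hone : ∀ x : h₁, (1 : h₁ →L[ℂ] h₁) x = x := fun _ => rfl
  have hsum : κm + κp = 1 := by rw [hκp, hκm]; ring
  have hκ0 : κp ≠ 0 := by
    intro h
    have := congrArg Complex.re h
    simp [hκp] at this
  have hconj : (starRingEnd ℂ) κp = κm := by
    rw [hκp, hκm]; simp [Complex.conj_ofReal, sub_eq_add_neg, Complex.conj_ofNat]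
  have hunit : IsUnit (1 + (Complex.I * κp) • E₁₁) := by
    have hz : (Complex.I / κp) ∉ spectrum ℂ E₁₁ := by
      intro hmem
      have h1 := hE₁₁.mem_spectrum_eq_re hmem
      have h2 : (Complex.I / κp).im = 0 := by rw [h1]; simp
      have h3 : (Complex.I / κp).im = (1/2) / Complex.normSq κp := by
        rw [Complex.div_im]; simp [hκp]
      rw [h3] at h2
      have h4 : Complex.normSq κp ≠ 0 := by simpa using hκ0
      field_simp at h2
      norm_num at h2
    rw [spectrum.notMem_iff] at hz
    have hc : (-(Complex.I * κp)) ≠ 0 := by simp [hκ0]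
    have hu := hz.smul (Units.mk0 (-(Complex.I * κp)) hc)
    convert hu using 1
    rw [Units.smul_mk0, smul_sub, Algebra.algebraMap_eq_smul_one, smul_smul, neg_smul (Complex.I * κp) E₁₁, sub_neg_eq_add]
    congr 1
    have : -(Complex.I * κp) * (Complex.I / κp) = 1 := by
      field_simp
      simp
    rw [this, one_smul]
  have hAR : (1 + (Complex.I * κp) • E₁₁) * R = 1 := by
    rw [hR]; exact Ring.mul_inverse_cancel _ hunit
  have hRA : R * (1 + (Complex.I * κp) • E₁₁) = 1 := by
    rw [hR]; exact Ring.inverse_mul_cancel _ hunit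
  have hstarA : star (1 + (Complex.I * κp) • E₁₁) = 1 - (Complex.I * κm) • E₁₁ := by
    rw [star_add, star_smul, hE₁₁.star_eq, star_one, sub_eq_add_neg, ← neg_smul]
    congr 2
    simp [hconj, mul_comm]
  have hQB : star R * (1 - (Complex.I * κm) • E₁₁) = 1 := by
    rw [← hstarA, ← star_mul, hAR, star_one]
  have hEE : E₁₁ * R = R * E₁₁ := by
    have h := hAR.trans hRA.symm
    rw [add_mul, mul_add, one_mul, mul_one, smul_mul_assoc, mul_smul_comm] at h
    exact smul_right_injective _ (mul_ne_zero Complex.I_ne_zero hκ0) (add_left_cancel h)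
  have hAS : (1 + (Complex.I * κp) • E₁₁) * S = 1 - (Complex.I * κm) • E₁₁ := by
    have : S = R * (1 - (Complex.I * κm) • E₁₁) := by
      rw [hS, sub_mul, mul_sub, one_mul, mul_one, smul_mul_assoc, mul_smul_comm, hEE]
    rw [this, ← mul_assoc, hAR, one_mul]
  have hQS : star R * S = R := by rw [hS, ← mul_assoc, hQB, one_mul]
  have hkS : κm • (1 : h₁ →L[ℂ] h₁) + κp • S = R := by
    rw [hS]
    nth_rewrite 1 [← hAR]
    rw [← smul_mul_assoc, ← smul_mul_assoc, ← add_mul]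
    have : κm • (1 + (Complex.I * κp) • E₁₁) + κp • (1 - (Complex.I * κm) • E₁₁) = (κm + κp) • 1 := by
      module
    rw [this, hsum, one_smul, one_mul]
  have hQR : κp • R + κm • star R = star R * R := by
    have h1 : star R * (κm • 1 + κp • S) = star R * R := by rw [hkS]
    rw [mul_add, mul_smul_comm, mul_smul_comm, mul_one, hQS] at h1
    rw [← h1, add_comm]
  have hLadj : adjoint L = Complex.I • (E₀₁ ∘L star R) := by
    rw [hL, hE₀₁, map_smulₛₗ, adjoint_comp]
    simp [star_eq_adjoint]
  have hXadj : adjoint X = κm • (E₀₁ ∘L (star R ∘L E₁₀)) := by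
    rw [hX, hE₀₁, map_smulₛₗ, adjoint_comp, adjoint_comp, adjoint_adjoint, hconj, star_eq_adjoint]
    rfl
  have key : ∀ (u v : h₁) (Φ : h₀), v = S u + L Φ →
      κm • u + κp • v = R u - (Complex.I * κp) • R (E₁₀ Φ) := by
    intro u v Φ h
    have := congrArg (fun T : h₁ →L[ℂ] h₁ => T u) hkS
    simp at this
    rw [h, ← this, hL]
    simp
    module
  constructor
  · intro u v Φ
    have e : Complex.I • (u - v) + E₁₁ (κm • u + κp • v) + E₁₀ Φ =
        Complex.I • ((1 + (Complex.I * κp) • E₁₁) (S u + L Φ - v)) := by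
      have h1 := congrArg (fun T : h₁ →L[ℂ] h₁ => T u) hAS
      have h2 := congrArg (fun T : h₁ →L[ℂ] h₁ => T (E₁₀ Φ)) hAR
      simp only [hmul] at h1 h2
      have h3 : (1 + (Complex.I * κp) • E₁₁) (L Φ) = -Complex.I • E₁₀ Φ := by
        rw [hL, smul_apply, comp_apply, map_smul, h2]; simp
      rw [map_sub, map_add _ (S u), h1, h3]
      simp only [add_apply, sub_apply, smul_apply, hone, map_add, map_smul, smul_sub, smul_add, smul_smul, ← mul_assoc, mul_neg, Complex.I_mul_I]
      module
    rw [e, smul_eq_zero_iff_right Complex.I_ne_zero]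
    constructor
    · intro h
      have h2 := congrArg (fun T : h₁ →L[ℂ] h₁ => T (S u + L Φ - v)) hRA
      simp only [hmul, h, map_zero, hone] at h2
      exact (sub_eq_zero.mp h2.symm).symm
    · intro h
      rw [← h, sub_self, map_zero]
  · intro u Φ v h
    rw [key u v Φ h, hLadj, hH, hXadj]
    have h1 := congrArg (fun T : h₁ →L[ℂ] h₁ => E₀₁ (T u)) hQS
    have h2 := congrArg (fun T : h₁ →L[ℂ] h₁ => E₀₁ (T (E₁₀ Φ))) hQR
    simp only [hmul, add_apply, smul_apply, map_add, map_smul] at h1 h2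
    simp only [hL, hX, add_apply, sub_apply, smul_apply, comp_apply, map_sub, map_smul, h1, ← h2]
    have hi : Complex.I * (2 * Complex.I)⁻¹ = 1/2 := by
      field_simp
    simp only [smul_add, smul_sub, smul_smul, ← mul_assoc, hi, mul_neg, neg_mul, Complex.I_mul_I, mul_one, one_mul, neg_neg]
    module
end
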